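/- Let B be a unital complex algebra, (M, E : M → B) a B-probability space, D ⊆ B a unital subalgebra, and F : B → D a conditional expectation. Let N ⊆ M be a subalgebra containing D, and assume that the B-valued cumulant map restricted to tuples from N is valued in D, i.e. {m₁, …, m_p}_E ∈ D for all p ≥ 1 and all m₁, …, m_p ∈ N. Then the D-valued cumulant map of the D-probability space (M, F∘E) agrees on such tuples with the B-valued one: {m₁, …, m_p}_{F∘E} = {m₁, …, m_p}_E for all p ≥ 1 and all m₁, …, m_p ∈ N. -/

import Mathlib

open scoped Classical

noncomputable section

namespace OVFree

variable {B M : Type*}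

/-- `P` is a set partition of `{1, …, n}` (modelled on `Fin n`): its blocks are
nonempty and every point lies in exactly one block. -/
def IsPartition {n : ℕ} (P : Finset (Finset (Fin n))) : Prop :=
  (∀ t ∈ P, t.Nonempty) ∧ ∀ i : Fin n, ∃! t, t ∈ P ∧ i ∈ t

/-- A set partition is non-crossing if there are no `a < b < c < d` with `a, c` in one
block and `b, d` in a different block. -/
def IsNonCrossing {n : ℕ} (P : Finset (Finset (Fin n))) : Prop :=
  ∀ a b c d : Fin n, a < b → b < c → c < d →
    ∀ t ∈ P, ∀ u ∈ P, a ∈ t → c ∈ t → b ∈ u → d ∈ u → t = u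

/-- `NC n`: the (finite) set of non-crossing partitions of `{1, …, n}`. -/
def NC (n : ℕ) : Finset (Finset (Finset (Fin n))) :=
  Finset.univ.filter fun P => IsPartition P ∧ IsNonCrossing P

/-- `i` is the least element of its block of `P`. -/
def IsBlockMin {n : ℕ} (P : Finset (Finset (Fin n))) (i : Fin n) : Prop :=
  ∀ t ∈ P, i ∈ t → ∀ j ∈ t, i ≤ j

/-- `i` is the greatest element of its block of `P`. -/
def IsBlockMax {n : ℕ} (P : Finset (Finset (Fin n))) (i : Fin n) : Prop :=
  ∀ t ∈ P, i ∈ t → ∀ j ∈ t, j ≤ i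

section Brack

variable [Ring B] [Algebra ℂ B] [Ring M] [Algebra ℂ M]

/-- A multiplicative map `⟨⋯⟩ : ⋃ₙ Mⁿ → B` (tuples are encoded as lists): a sequence of
`ℂ`-multilinear maps which is `B`-balanced in the sense of Speicher.  Here `ι : B →ₐ[ℂ] M`
is the inclusion of `B` as a unital subalgebra of `M`. -/
structure MultiplicativeMap (ι : B →ₐ[ℂ] M) where
  toFun : List M → B
  map_add : ∀ (pre : List M) (x y : M) (post : List M),
    toFun (pre ++ (x + y) :: post) = toFun (pre ++ x :: post) + toFun (pre ++ y :: post)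
  map_smul : ∀ (pre : List M) (c : ℂ) (x : M) (post : List M),
    toFun (pre ++ (c • x) :: post) = c • toFun (pre ++ x :: post)
  B_left : ∀ (b : B) (x : M) (post : List M),
    toFun ((ι b * x) :: post) = b * toFun (x :: post)
  B_right : ∀ (pre : List M) (x : M) (b : B),
    toFun (pre ++ [x * ι b]) = toFun (pre ++ [x]) * b
  B_mid : ∀ (pre : List M) (x : M) (b : B) (y : M) (post : List M),
    toFun (pre ++ (x * ι b) :: y :: post) = toFun (pre ++ x :: (ι b * y) :: post)

/-- Auxiliary operation: multiply the most recently collected argument of an open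
bracket (arguments are stored in reverse order) on the right by `ι b`. -/
def closeArg (ι : B →ₐ[ℂ] M) (b : B) : List M → List M
  | [] => []
  | a :: t => (a * ι b) :: t

/-- One step of the evaluation of the bracketing `π⟨m₁, …, mₙ⟩`.  The state consists of a
stack of argument lists (in reverse order) for the currently open brackets, together with
the product of the values of the already closed outermost brackets.  When `i` is the least
element of its block a new bracket is opened; `m i` is appended to the innermost open
bracket; when `i` is the greatest element of its block the innermost bracket `⟨…⟩` is
evaluated via `κ` and its value is multiplied into the preceding argument of the enclosing
bracket (per the insertion rule), resp. into the outer product (per the disjoint-union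
rule). -/
def bracketingStep (κ : List M → B) (ι : B →ₐ[ℂ] M) {n : ℕ} (P : Finset (Finset (Fin n)))
    (m : Fin n → M) (s : List (List M) × B) (i : Fin n) : List (List M) × B :=
  let st₁ : List (List M) := if IsBlockMin P i then [] :: s.1 else s.1
  let st₂ : List (List M) :=
    match st₁ with
    | [] => []
    | ts :: rest => (m i :: ts) :: rest
  if IsBlockMax P i then
    match st₂ with
    | [] => ([], s.2)
    | ts :: rest =>
        let b := κ ts.reverse
        match rest with
        | [] => ([], s.2 * b)
        | us :: rest' => (closeArg ι b us :: rest', s.2)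
  else (st₂, s.2)

/-- The bracketing `π⟨m₁, …, mₙ⟩ ∈ B` determined by a non-crossing partition `P` and a
multiplicative map `κ`: each block of `P` is interpreted as a bracket `⟨⋯⟩`, inner blocks
being inserted (as elements of `B`) after the preceding element of the enclosing block,
and the values of the outermost brackets being multiplied in order. -/
def bracketing (κ : List M → B) (ι : B →ₐ[ℂ] M) {n : ℕ} (P : Finset (Finset (Fin n)))
    (m : Fin n → M) : B :=
  ((List.finRange n).foldl (bracketingStep κ ι P m) ([], 1)).2

/-- `κ` is the `B`-valued cumulant map `{⋯}_E` of the `B`-probability space `(M, E)`: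
a multiplicative map satisfying the moment–cumulant formula
`E(m₁ ⋯ mₙ) = Σ_{π ∈ NC(n)} π{m₁, …, mₙ}_E`. -/
def IsCumulantMap (ι : B →ₐ[ℂ] M) (E : M →ₗ[ℂ] B) (κ : MultiplicativeMap ι) : Prop :=
  ∀ (n : ℕ) (m : Fin n → M), 0 < n →
    E (((List.finRange n).map m).prod) = ∑ P ∈ NC n, bracketing κ.toFun ι P m

/-- The cumulant series `k_{i₁,…,i_{k+1}}(b₁, …, b_k) = {X_{i₁} b₁, …, X_{i_k} b_k, X_{i_{k+1}}}`
of a family `X₁, …, X_N` with respect to a multiplicative map `κ`. -/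
def cumulantSeries {ι : B →ₐ[ℂ] M} (κ : MultiplicativeMap ι) {N : ℕ} (X : Fin N → M)
    {k : ℕ} (i : Fin (k + 1) → Fin N) (b : Fin k → B) : B :=
  κ.toFun (((List.finRange k).map fun j => X (i j.castSucc) * ι (b j)) ++ [X (i (Fin.last k))])

/-- `E : M → B` is a conditional expectation onto the unital subalgebra `ι(B) ⊆ M`. -/
def IsCondExp (ι : B →ₐ[ℂ] M) (E : M →ₗ[ℂ] B) : Prop :=
  E 1 = 1 ∧ ∀ (b b' : B) (m : M), E (ι b * m * ι b') = b * E m * b'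

/-- The subalgebras `A₁, A₂ ⊆ M` are free with amalgamation (with respect to the
`D`-valued expectation `G`, `D` being a common subalgebra of `A₁` and `A₂`): any
alternating product of `G`-centered elements of `A₁` and `A₂` is `G`-centered. -/
def FreeWithAmalgamation (G : M → B) (A₁ A₂ : Subalgebra ℂ M) : Prop :=
  ∀ l : List (M × Bool), l ≠ [] →
    List.Chain' (fun p q : M × Bool => p.2 ≠ q.2) l →
    (∀ p ∈ l, p.1 ∈ (if p.2 then A₁ else A₂) ∧ G p.1 = 0) →
    G (l.map Prod.fst).prod = 0

end Brack

end OVFree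

open OVFree

/-!
Both moment–cumulant formulas are compared by induction on the length `n` of the tuple.  Isolate
the one-block partition `1ₙ`, which contributes the cumulant `{m₁, …, mₙ}` itself.  Every other
partition has at least two blocks, and all brackets occurring in its evaluation have fewer than `n`
arguments: a bracket collects at most one block minimum, so with `r` blocks it has at most
`n - r + 1` arguments.  These arguments stay in `N`, since an inner bracket evaluates into `D`, so
by induction the two bracketings agree.  As `F` fixes `D`, applying it to the `B`-valued formula
and cancelling leaves the equality of the two terms for `1ₙ`.
-/

namespace OVFree

section Partition

variable {n : ℕ} {P : Finset (Finset (Fin n))}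

theorem IsPartition.eq_of_mem (hP : IsPartition P) {t u : Finset (Fin n)} {i : Fin n}
    (ht : t ∈ P) (hu : u ∈ P) (hit : i ∈ t) (hiu : i ∈ u) : t = u :=
  (hP.2 i).unique ⟨ht, hit⟩ ⟨hu, hiu⟩

theorem IsPartition.isBlockMin_min' (hP : IsPartition P) {t : Finset (Fin n)} (ht : t ∈ P)
    (hne : t.Nonempty) : IsBlockMin P (t.min' hne) := by
  intro u hu hmin j hj
  obtain rfl := hP.eq_of_mem ht hu (t.min'_mem hne) hmin
  exact t.min'_le j hj

theorem IsPartition.eq_singleton_univ (hP : IsPartition P) (huniv : Finset.univ ∈ P) :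
    P = {Finset.univ} := by
  refine Finset.eq_singleton_iff_unique_mem.2 ⟨huniv, fun t ht => ?_⟩
  obtain ⟨i, hi⟩ := hP.1 t ht
  exact hP.eq_of_mem ht huniv hi (Finset.mem_univ i)

theorem IsPartition.exists_ne_zero_isBlockMin {p : ℕ} {P : Finset (Finset (Fin (p + 1)))}
    (hP : IsPartition P) (hne : P ≠ {Finset.univ}) : ∃ j, j ≠ 0 ∧ IsBlockMin P j := by
  obtain ⟨t₀, ⟨ht₀, h0⟩, -⟩ := hP.2 0
  obtain ⟨i, hi⟩ : ∃ i, i ∉ t₀ := by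
    by_contra! h
    exact hne (hP.eq_singleton_univ (Finset.eq_univ_of_forall h ▸ ht₀))
  obtain ⟨t, ⟨ht, hit⟩, -⟩ := hP.2 i
  refine ⟨t.min' ⟨i, hit⟩, fun hmin => ?_, hP.isBlockMin_min' ht _⟩
  have h0t : 0 ∈ t := hmin ▸ t.min'_mem ⟨i, hit⟩
  exact hi (hP.eq_of_mem ht ht₀ h0t h0 ▸ hit)

theorem IsPartition.countP_not_isBlockMin_add_one_lt (hn : 0 < n) (hP : IsPartition P)
    (hne : P ≠ {Finset.univ}) :
    (List.finRange n).countP (fun i => ¬ IsBlockMin P i) + 1 < n := by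
  obtain _ | p := n
  · exact absurd hn (lt_irrefl 0)
  obtain ⟨j, hj0, hj⟩ := hP.exists_ne_zero_isBlockMin hne
  have h0 : IsBlockMin P 0 := fun _ _ _ i _ => Fin.zero_le i
  have hmins : 2 ≤ (Finset.univ.filter (IsBlockMin P)).card := by
    rw [← Finset.card_pair hj0]
    exact Finset.card_le_card (by simp [Finset.insert_subset_iff, hj, h0])
  have hcount : (List.finRange (p + 1)).countP (fun i => ¬ IsBlockMin P i) =
      (Finset.univ.filter fun i => ¬ IsBlockMin P i).card :=
    List.countP_eq_length_filter
  have hadd := Finset.card_filter_add_card_filter_not (s := Finset.univ) (IsBlockMin P)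
  rw [Finset.card_univ, Fintype.card_fin] at hadd
  omega

theorem isBlockMin_singleton_univ {p : ℕ} {i : Fin (p + 1)} :
    IsBlockMin {Finset.univ} i ↔ i = 0 := by
  rw [← bot_eq_zero, ← isBot_iff_eq_bot]
  simp only [IsBlockMin, IsBot, Finset.mem_singleton, forall_eq, Finset.mem_univ, true_imp_iff]

theorem isBlockMax_singleton_univ {p : ℕ} {i : Fin (p + 1)} :
    IsBlockMax {Finset.univ} i ↔ i = Fin.last p := by
  rw [← Fin.top_eq_last, ← isTop_iff_eq_top]
  simp only [IsBlockMax, IsTop, Finset.mem_singleton, forall_eq, Finset.mem_univ, true_imp_iff]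

theorem singleton_univ_mem_NC (hn : 0 < n) : {Finset.univ} ∈ NC n := by
  have : Nonempty (Fin n) := ⟨⟨0, hn⟩⟩
  refine Finset.mem_filter.2 ⟨Finset.mem_univ _, ⟨?_, fun i => ?_⟩, ?_⟩
  · simp only [Finset.mem_singleton, forall_eq, Finset.univ_nonempty]
  · exact ⟨Finset.univ, by simp, fun t ht => Finset.mem_singleton.1 ht.1⟩
  · intro a b c d _ _ _ t ht u hu _ _ _ _
    rw [Finset.mem_singleton.1 ht, Finset.mem_singleton.1 hu]

end Partition

section Bracketing

variable {B M : Type*} {n : ℕ} {P : Finset (Finset (Fin n))} {m : Fin n → M}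

/-- Append the argument `x` to the innermost open bracket.  As in `bracketingStep`, the innermost
bracket heads the stack and its arguments are stored in reverse order. -/
def pushArg (x : M) : List (List M) → List (List M)
  | [] => []
  | ts :: rest => (x :: ts) :: rest

/-- The part of `bracketingStep` that precedes the evaluation of a bracket: open a new bracket if
`i` is a block minimum, then record the argument `m i`. -/
def openAndPush (P : Finset (Finset (Fin n))) (m : Fin n → M) (i : Fin n)
    (st : List (List M)) : List (List M) :=
  pushArg (m i) (if IsBlockMin P i then [] :: st else st)

theorem head?_openAndPush_ne (i : Fin n) (st : List (List M)) :
    (openAndPush P m i st).head? ≠ some [] := by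
  unfold openAndPush
  cases (if IsBlockMin P i then [] :: st else st) <;> simp [pushArg]

variable [Ring B] [Algebra ℂ B] [Ring M] [Algebra ℂ M]

/-- The part of `bracketingStep` that evaluates the innermost open bracket and inserts its value
into the enclosing bracket, or into the outer product if there is none. -/
def closeBracket (κ : List M → B) (ι : B →ₐ[ℂ] M) :
    List (List M) × B → List (List M) × B
  | ([], b) => ([], b)
  | ([ts], b) => ([], b * κ ts.reverse)
  | (ts :: us :: rest, b) => (closeArg ι (κ ts.reverse) us :: rest, b)

theorem bracketingStep_eq (κ : List M → B) (ι : B →ₐ[ℂ] M) (s : List (List M) × B) (i : Fin n) :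
    bracketingStep κ ι P m s i =
      if IsBlockMax P i then closeBracket κ ι (openAndPush P m i s.1, s.2)
      else (openAndPush P m i s.1, s.2) := by
  unfold bracketingStep openAndPush
  rcases (if IsBlockMin P i then [] :: s.1 else s.1) with _ | ⟨ts, _ | ⟨us, rest⟩⟩ <;> rfl

theorem foldl_bracketingStep_of_interior (κ : List M → B) (ι : B →ₐ[ℂ] M) (L : List (Fin n))
    (hmin : ∀ i ∈ L, ¬ IsBlockMin P i) (hmax : ∀ i ∈ L, ¬ IsBlockMax P i)
    (ts : List M) (rest : List (List M)) (b : B) :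
    L.foldl (bracketingStep κ ι P m) (ts :: rest, b) = (((L.map m).reverse ++ ts) :: rest, b) := by
  induction L generalizing ts with
  | nil => rfl
  | cons i L ih =>
    rw [List.forall_mem_cons] at hmin hmax
    rw [List.foldl_cons, bracketingStep_eq, if_neg hmax.1, openAndPush, if_neg hmin.1, pushArg,
      ih hmin.2 hmax.2]
    simp only [List.map_cons, List.reverse_cons, List.append_assoc, List.singleton_append]

theorem bracketing_singleton_univ (κ : List M → B) (ι : B →ₐ[ℂ] M) (hn : 0 < n) (m : Fin n → M) :
    bracketing κ ι {Finset.univ} m = κ ((List.finRange n).map m) := by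
  obtain _ | _ | p := n
  · exact absurd hn (lt_irrefl 0)
  · simp only [bracketing, List.finRange_succ, List.finRange_zero, List.map_nil, List.foldl_cons,
      List.foldl_nil, bracketingStep_eq, openAndPush, isBlockMin_singleton_univ,
      isBlockMax_singleton_univ, Fin.last_zero, if_true, pushArg, closeBracket, one_mul,
      List.map_cons, List.reverse_singleton]
  · set L : List (Fin (p + 2)) := (List.finRange p).map fun i => i.castSucc.succ with hL
    have hsplit : List.finRange (p + 2) = 0 :: (L ++ [Fin.last (p + 1)]) := by
      rw [List.finRange_succ, List.finRange_succ_last]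
      simp [hL, Function.comp_def]
    have hLmin : ∀ i ∈ L, ¬ IsBlockMin {Finset.univ} i := by simp [hL, isBlockMin_singleton_univ]
    have hLmax : ∀ i ∈ L, ¬ IsBlockMax {Finset.univ} i := by
      simp [hL, isBlockMax_singleton_univ, ← Fin.succ_last, Fin.castSucc_ne_last]
    have hfirst : bracketingStep κ ι {Finset.univ} m ([], 1) 0 = ([[m 0]], 1) := by
      simp [bracketingStep, isBlockMin_singleton_univ, isBlockMax_singleton_univ, Fin.ext_iff]
    rw [bracketing, hsplit, List.foldl_cons, hfirst, List.foldl_append,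
      foldl_bracketingStep_of_interior κ ι L hLmin hLmax, List.foldl_cons, List.foldl_nil,
      bracketingStep_eq, if_pos (isBlockMax_singleton_univ.2 rfl), openAndPush,
      if_neg (by simp [isBlockMin_singleton_univ])]
    simp [pushArg, closeBracket]

end Bracketing

section Comparison

variable {B D M : Type*} [Ring B] [Algebra ℂ B] [Ring D] [Algebra ℂ D]
variable {ψ : D →ₐ[ℂ] B} {S : Set M} {k : ℕ} {κ : List M → B} {κD : List M → D}

/-- `κD` is carried to `κ` by `ψ` on the nonempty tuples from `S` of length at most `k`. -/
def AgreeUpTo (ψ : D →ₐ[ℂ] B) (S : Set M) (k : ℕ) (κD : List M → D) (κ : List M → B) : Prop :=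
  ∀ l : List M, l ≠ [] → l.length ≤ k → (∀ x ∈ l, x ∈ S) → ψ (κD l) = κ l

theorem AgreeUpTo.mono {k' : ℕ} (h : AgreeUpTo ψ S k' κD κ) (hk : k ≤ k') :
    AgreeUpTo ψ S k κD κ :=
  fun l hne hl => h l hne (hl.trans hk)

/-- The states `t` and `s` of a `D`-valued and a `B`-valued evaluation of a bracketing correspond:
they have the same open brackets, with at most `k` arguments each, all from `S`, and `ψ` carries one
outer product to the other. -/
structure StatesAgree (ψ : D →ₐ[ℂ] B) (S : Set M) (k : ℕ)
    (t : List (List M) × D) (s : List (List M) × B) : Prop where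
  stack_eq : t.1 = s.1
  map_outer : ψ t.2 = s.2
  length_le : ∀ l ∈ s.1, l.length ≤ k
  mem : ∀ l ∈ s.1, ∀ x ∈ l, x ∈ S

variable {n : ℕ} {P : Finset (Finset (Fin n))} {m : Fin n → M}
variable {t : List (List M) × D} {s : List (List M) × B}

theorem StatesAgree.openPush {i : Fin n} (hm : m i ∈ S) (hk : 0 < k)
    (h : StatesAgree ψ S k t s) :
    StatesAgree ψ S (k + if IsBlockMin P i then 0 else 1)
      (openAndPush P m i t.1, t.2) (openAndPush P m i s.1, s.2) := by
  obtain ⟨_, b⟩ := s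
  obtain ⟨st, d⟩ := t
  obtain ⟨rfl, rfl, hlen, hmem⟩ := h
  by_cases hi : IsBlockMin P i
  · simp only [openAndPush, if_pos hi, pushArg, add_zero]
    exact ⟨rfl, rfl, List.forall_mem_cons.2 ⟨hk, hlen⟩,
      List.forall_mem_cons.2 ⟨by simpa only [List.mem_singleton, forall_eq] using hm, hmem⟩⟩
  simp only [openAndPush, if_neg hi]
  obtain _ | ⟨ts, rest⟩ := st
  · exact ⟨rfl, rfl, List.forall_mem_nil _, List.forall_mem_nil _⟩
  · rw [List.forall_mem_cons] at hlen hmem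
    exact ⟨rfl, rfl,
      List.forall_mem_cons.2 ⟨Nat.succ_le_succ hlen.1, fun l hl => (hlen.2 l hl).trans k.le_succ⟩,
      List.forall_mem_cons.2 ⟨List.forall_mem_cons.2 ⟨hm, hmem.1⟩, hmem.2⟩⟩

variable [Ring M] [Algebra ℂ M] {ι : B →ₐ[ℂ] M}

theorem StatesAgree.close (hS : ∀ x ∈ S, ∀ d, x * ι (ψ d) ∈ S)
    (hκ : AgreeUpTo ψ S k κD κ) (h : StatesAgree ψ S k t s) (hne : s.1.head? ≠ some []) :
    StatesAgree ψ S k (closeBracket κD (ι.comp ψ) t) (closeBracket κ ι s) := by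
  obtain ⟨_, b⟩ := s
  obtain ⟨st, d⟩ := t
  obtain ⟨rfl, rfl, hlen, hmem⟩ := h
  obtain _ | ⟨ts, rest⟩ := st
  · exact ⟨rfl, rfl, hlen, hmem⟩
  rw [List.forall_mem_cons] at hlen hmem
  have hval : ψ (κD ts.reverse) = κ ts.reverse :=
    hκ _ (by simpa using hne) (by simpa using hlen.1) (by simpa using hmem.1)
  obtain _ | ⟨us, rest⟩ := rest
  · exact ⟨rfl, by simp [closeBracket, hval], by simp [closeBracket],
      by simp [closeBracket]⟩
  rw [List.forall_mem_cons (l := rest)] at hlen hmem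
  obtain _ | ⟨x, us⟩ := us
  · exact ⟨rfl, rfl, List.forall_mem_cons.2 hlen.2, List.forall_mem_cons.2 hmem.2⟩
  · have hx : x * ι (κ ts.reverse) ∈ S := hval ▸ hS x (hmem.2.1 x List.mem_cons_self) _
    refine ⟨by simp [closeBracket, closeArg, hval], rfl, List.forall_mem_cons.2 hlen.2,
      List.forall_mem_cons.2 ⟨List.forall_mem_cons.2 ⟨hx, ?_⟩, hmem.2.2⟩⟩
    exact fun y hy => hmem.2.1 y (List.mem_cons_of_mem x hy)

theorem StatesAgree.step (hS : ∀ x ∈ S, ∀ d, x * ι (ψ d) ∈ S) {i : Fin n}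
    (hm : m i ∈ S) (hk : 0 < k)
    (hκ : AgreeUpTo ψ S (k + if IsBlockMin P i then 0 else 1) κD κ) (h : StatesAgree ψ S k t s) :
    StatesAgree ψ S (k + if IsBlockMin P i then 0 else 1)
      (bracketingStep κD (ι.comp ψ) P m t i) (bracketingStep κ ι P m s i) := by
  have hopen := h.openPush (P := P) hm hk
  rw [bracketingStep_eq, bracketingStep_eq]
  by_cases hmax : IsBlockMax P i
  · simpa only [if_pos hmax] using hopen.close hS hκ (head?_openAndPush_ne i s.1)
  · simpa only [if_neg hmax] using hopen

theorem StatesAgree.foldl_step (hS : ∀ x ∈ S, ∀ d, x * ι (ψ d) ∈ S)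
    (hm : ∀ i, m i ∈ S) (L : List (Fin n)) (hk : 0 < k)
    (hκ : AgreeUpTo ψ S (k + L.countP (fun i => ¬ IsBlockMin P i)) κD κ)
    (h : StatesAgree ψ S k t s) :
    StatesAgree ψ S (k + L.countP (fun i => ¬ IsBlockMin P i))
      (L.foldl (bracketingStep κD (ι.comp ψ) P m) t)
      (L.foldl (bracketingStep κ ι P m) s) := by
  induction L generalizing k t s with
  | nil => exact h
  | cons i L ih =>
    have hcount : k + (i :: L).countP (fun i => ¬ IsBlockMin P i) =
        (k + if IsBlockMin P i then 0 else 1) + L.countP (fun i => ¬ IsBlockMin P i) := by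
      by_cases hi : IsBlockMin P i <;> simp [hi, add_assoc, add_comm]
    rw [hcount] at hκ ⊢
    exact ih (Nat.add_pos_left hk _) hκ
      (h.step hS (hm i) hk (hκ.mono (Nat.le_add_right _ _)))

theorem map_bracketing (hS : ∀ x ∈ S, ∀ d, x * ι (ψ d) ∈ S) (hm : ∀ i, m i ∈ S)
    (hκ : AgreeUpTo ψ S (1 + (List.finRange n).countP (fun i => ¬ IsBlockMin P i)) κD κ) :
    ψ (bracketing κD (ι.comp ψ) P m) = bracketing κ ι P m := by
  have hinit : StatesAgree ψ S 1 (([], 1) : List (List M) × D) (([], 1) : List (List M) × B) :=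
    ⟨rfl, map_one ψ, by simp, by simp⟩
  exact (hinit.foldl_step hS hm (List.finRange n) one_pos hκ).map_outer

theorem map_sum_bracketing_erase (hn : 0 < n) (hS : ∀ x ∈ S, ∀ d, x * ι (ψ d) ∈ S)
    (hm : ∀ i, m i ∈ S) (hκ : AgreeUpTo ψ S (n - 1) κD κ) :
    ψ (∑ P ∈ (NC n).erase {Finset.univ}, bracketing κD (ι.comp ψ) P m) =
      ∑ P ∈ (NC n).erase {Finset.univ}, bracketing κ ι P m := by
  rw [map_sum]
  refine Finset.sum_congr rfl fun P hP => map_bracketing hS hm (hκ.mono ?_)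
  obtain ⟨hne, hPNC⟩ := Finset.mem_erase.1 hP
  have hpart : IsPartition P := (Finset.mem_filter.1 hPNC).2.1
  have := hpart.countP_not_isBlockMin_add_one_lt hn hne
  omega

end Comparison

section MomentCumulant

variable {B M : Type*} [Ring B] [Algebra ℂ B] [Ring M] [Algebra ℂ M]

/-- The moment–cumulant formula `E(m₁ ⋯ mₙ) = Σ_{π ∈ NC(n)} π⟨m₁, …, mₙ⟩`, for arbitrary functions
`E` and `κ = ⟨⋯⟩`.  `IsCumulantMap` is the case of a linear `E` and a multiplicative map `κ`. -/
def MomentCumulantFormula (ι : B →ₐ[ℂ] M) (E : M → B) (κ : List M → B) : Prop :=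
  ∀ (n : ℕ) (m : Fin n → M), 0 < n →
    E (((List.finRange n).map m).prod) = ∑ P ∈ NC n, bracketing κ ι P m

theorem MomentCumulantFormula.apply_prod {ι : B →ₐ[ℂ] M} {E : M → B} {κ : List M → B}
    (h : MomentCumulantFormula ι E κ) {l : List M} (hl : l ≠ []) :
    E l.prod = κ l + ∑ P ∈ (NC l.length).erase {Finset.univ}, bracketing κ ι P l.get := by
  have hn : 0 < l.length := List.length_pos_iff.2 hl
  have hmoment := h l.length l.get hn
  rwa [← Finset.add_sum_erase _ _ (singleton_univ_mem_NC hn), bracketing_singleton_univ _ _ hn,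
    List.map_get_finRange] at hmoment

end MomentCumulant

end OVFree

theorem cumulant_map_restricts_on_subalgebra_general
    {B D M : Type*} [Ring B] [Algebra ℂ B] [Ring D] [Algebra ℂ D] [Ring M] [Algebra ℂ M]
    (ι : B →ₐ[ℂ] M) (ψ : D →ₐ[ℂ] B) (E : M → B) (F : B →+ B) (hF : ∀ d, F (ψ d) = ψ d)
    (ED : M → D) (hED : ∀ m, ψ (ED m) = F (E m))
    (κ : List M → B) (hκ : MomentCumulantFormula ι E κ)
    (κD : List M → D) (hκD : MomentCumulantFormula (ι.comp ψ) ED κD)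
    (S : Set M) (hS : ∀ x ∈ S, ∀ d, x * ι (ψ d) ∈ S)
    (hrestr : ∀ l : List M, l ≠ [] → (∀ x ∈ l, x ∈ S) → κ l ∈ ψ.range)
    (l : List M) (hl : l ≠ []) (hlS : ∀ x ∈ l, x ∈ S) : ψ (κD l) = κ l := by
  induction hlen : l.length using Nat.strong_induction_on generalizing l with
  | _ n ih =>
  subst hlen
  have hn : 0 < l.length := List.length_pos_iff.2 hl
  have hshort : AgreeUpTo ψ S (l.length - 1) κD κ := fun l' hl' hlen' hl'S =>
    ih l'.length (by omega) l' hl' hl'S rfl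
  set R := ∑ P ∈ (NC l.length).erase {Finset.univ}, bracketing κD (ι.comp ψ) P l.get
  have hE : E l.prod = κ l + ψ R := by
    rw [hκ.apply_prod hl, map_sum_bracketing_erase hn hS (fun i => hlS _ (l.get_mem i)) hshort]
  obtain ⟨d, hd⟩ := hrestr l hl hlS
  have hFκ : F (κ l) = κ l := hd ▸ hF d
  refine add_right_cancel (b := ψ R) ?_
  calc ψ (κD l) + ψ R = ψ (ED l.prod) := by rw [hκD.apply_prod hl, map_add]
    _ = F (κ l + ψ R) := by rw [hED, hE]
    _ = κ l + ψ R := by rw [map_add, hFκ, hF]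

/-- Let `(M, E : M → B)` be a `B`-probability space (with `ι : B → M` the
inclusion of `B` as a unital subalgebra), `D ⊆ B` a unital subalgebra and `F : B → D` a
conditional expectation, so that `(M, F∘E)` is a `D`-probability space (`ED` is `F∘E`
viewed as a map into `D`).  Let `κ = {⋯}_E` be the `B`-valued and `κD = {⋯}_{F∘E}` the
`D`-valued cumulant map, and let `N ⊆ M` be a subalgebra containing `D`.  If `{⋯}_E`
restricted to tuples from `N` is valued in `D`, then `{m₁, …, m_p}_{F∘E} = {m₁, …, m_p}_E`
for all `p ≥ 1` and all `m₁, …, m_p ∈ N`. -/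
theorem cumulant_map_restricts_on_subalgebra
    {B M : Type*} [Ring B] [Algebra ℂ B] [Ring M] [Algebra ℂ M]
    (ι : B →ₐ[ℂ] M) (hι : Function.Injective ι)
    (E : M →ₗ[ℂ] B) (hE : IsCondExp ι E)
    (D : Subalgebra ℂ B)
    (F : B →ₗ[ℂ] B) (hFD : ∀ b, F b ∈ D) (hFid : ∀ d ∈ D, F d = d)
    (hFbimod : ∀ d ∈ D, ∀ d' ∈ D, ∀ b : B, F (d * b * d') = d * F b * d')
    (ED : M →ₗ[ℂ] ↥D) (hED : ∀ m : M, (ED m : B) = F (E m))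
    (κ : MultiplicativeMap ι) (hκ : IsCumulantMap ι E κ)
    (κD : MultiplicativeMap (ι.comp D.val)) (hκD : IsCumulantMap (ι.comp D.val) ED κD)
    (N : Subalgebra ℂ M) (hDN : ∀ d ∈ D, ι d ∈ N)
    (hrestr : ∀ l : List M, l ≠ [] → (∀ x ∈ l, x ∈ N) → κ.toFun l ∈ D) :
    ∀ l : List M, l ≠ [] → (∀ x ∈ l, x ∈ N) → ((κD.toFun l : ↥D) : B) = κ.toFun l := by
  exact cumulant_map_restricts_on_subalgebra_general ι D.val E F (fun d => hFid d d.2) ED hED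
    κ.toFun hκ κD.toFun hκD N (fun x hx d => N.mul_mem hx (hDN d d.2))
    (fun l hl hlN => by simpa using hrestr l hl hlN)
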